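/- arXiv:2004.14197 — 3 statements merged into one kernel-verified Lean document; each statement's English description precedes it below -/
import Mathlib

section
/- Given an arbitrary formal group law F over a commutative ring R, there is a unique power series q(x,y) ∈ R⟦x,y⟧ such that x[-1]y = (x−y)·q(x,y). Furthermore, q(x,y) is a unit of R⟦x,y⟧ and q(x,y) ≡ 1 mod (y); equivalently q(x,0) = 1. -/
noncomputable section
open MvPowerSeries

variable {k : Type*} [CommRing k]

/-- Substitution of a family of power series (each with zero constant term) into a
multivariate power series, via the standard coefficient formula. -/
def psSubst {σ τ : Type*} [Fintype σ] [DecidableEq σ]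
    (a : σ → MvPowerSeries τ k) (f : MvPowerSeries σ k) : MvPowerSeries τ k :=
  fun e => ∑ d ∈ Finset.Iic (Finsupp.equivFunOnFinite.symm fun _ : σ => e.sum fun _ m => m),
    (MvPowerSeries.coeff d f) * MvPowerSeries.coeff e (∏ i, a i ^ d i)

/-- The automorphism of `k⟦x,y⟧` exchanging the two variables. -/
def swapPS (f : MvPowerSeries (Fin 2) k) : MvPowerSeries (Fin 2) k :=
  fun d => MvPowerSeries.coeff (Finsupp.equivMapDomain (Equiv.swap 0 1) d) f

/-- A formal group law over `k`. -/
def IsFormalGroupLaw (F : MvPowerSeries (Fin 2) k) : Prop :=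
  swapPS F = F ∧
  psSubst ![X 0, 0] F = (X 0 : MvPowerSeries (Fin 2) k) ∧
  psSubst ![0, X 1] F = (X 1 : MvPowerSeries (Fin 2) k) ∧
  psSubst ![psSubst ![(X 0 : MvPowerSeries (Fin 3) k), X 1] F, X 2] F =
    psSubst ![(X 0 : MvPowerSeries (Fin 3) k), psSubst ![(X 1 : MvPowerSeries (Fin 3) k), X 2] F] F

/-- The formal difference `x [-1] y = F(x, ι(y)) ∈ k⟦x,y⟧`, where `ι` is the formal inverse. -/
def formalDiff (F : MvPowerSeries (Fin 2) k) (ι : PowerSeries k) : MvPowerSeries (Fin 2) k :=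
  psSubst ![X 0, psSubst (fun _ : Unit => (X 1 : MvPowerSeries (Fin 2) k)) ι] F

lemma aux_coeff_zero {σ τ : Type*} [Fintype σ] (a : σ → MvPowerSeries τ k)
    (ha : ∀ i, constantCoeff (a i) = 0) (d : σ →₀ ℕ) (e : τ →₀ ℕ)
    (h : e.degree < ∑ i, d i) : coeff e (∏ i, a i ^ d i) = 0 := by
  apply coeff_of_lt_order
  refine lt_of_lt_of_le ?_ (le_order_prod _ _)
  refine lt_of_lt_of_le (b := ((∑ i, d i : ℕ) : ℕ∞)) (by exact_mod_cast h) ?_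
  push_cast
  refine Finset.sum_le_sum fun i _ => ?_
  exact le_order_pow_of_constantCoeff_eq_zero _ (ha i)

lemma aux_psSubst {σ τ : Type*} [Fintype σ] [DecidableEq σ] (a : σ → MvPowerSeries τ k)
    (ha : ∀ i, constantCoeff (a i) = 0) (f : MvPowerSeries σ k) :
    psSubst a f = subst a f := by
  ext e
  rw [coeff_subst (hasSubst_of_constantCoeff_zero ha)]
  have hp : ∀ d : σ →₀ ℕ, (d.prod fun s m => a s ^ m) = ∏ i, a i ^ d i := fun d =>
    Finsupp.prod_fintype _ _ (by simp)
  simp only [hp, smul_eq_mul]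
  rw [finsum_eq_sum_of_support_subset]
  · rfl
  · intro d hd
    simp only [Finset.coe_Iic, Set.mem_Iic]
    by_contra hn
    apply hd
    rw [Finsupp.le_def] at hn
    push Not at hn
    obtain ⟨i, hi⟩ := hn
    simp only
    rw [aux_coeff_zero a ha d e, mul_zero]
    refine lt_of_lt_of_le ?_ (Finset.single_le_sum (f := fun i => d i) (fun _ _ => Nat.zero_le _)
      (Finset.mem_univ i))
    exact hi

lemma aux_dvd (a : Fin 2 → MvPowerSeries (Fin 2) k) (i : Fin 2)
    (hi : a i = 0) (h : ∀ j, j ≠ i → a j = X j) (f : MvPowerSeries (Fin 2) k)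
    (hf : subst a f = 0) : (X i : MvPowerSeries (Fin 2) k) ∣ f := by
  classical
  have ha : HasSubst a := by
    apply hasSubst_of_constantCoeff_zero
    intro j
    by_cases hj : j = i
    · subst hj; simp [hi]
    · simp [h j hj]
  rw [X_dvd_iff]
  intro e he
  have h1 := congrArg (coeff e) hf
  rw [coeff_subst ha, map_zero] at h1
  have hp : ∀ d : Fin 2 →₀ ℕ, (d.prod fun s m => a s ^ m) =
      if d i = 0 then monomial d 1 else 0 := by
    intro d
    rw [Finsupp.prod_fintype _ _ (by simp)]
    split_ifs with hd
    · rw [monomial_one_eq, Finsupp.prod_fintype _ _ (by simp)]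
      refine Finset.prod_congr rfl fun j _ => ?_
      by_cases hj : j = i
      · subst hj; simp [hd]
      · rw [h j hj]
    · exact Finset.prod_eq_zero (Finset.mem_univ i) (by simp [hi, hd])
  rw [finsum_eq_single _ e] at h1
  · rw [hp, if_pos he] at h1
    simpa using h1
  · intro d hd
    rw [hp]
    split_ifs
    · simp [coeff_monomial, hd.symm]
    · simp

lemma aux_X0_cancel (q : MvPowerSeries (Fin 2) k)
    (h : (X 0 : MvPowerSeries (Fin 2) k) * q = 0) : q = 0 := by
  ext d
  have := congrArg (coeff (Finsupp.single 0 1 + d)) h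
  rw [X, coeff_add_monomial_mul] at this
  simpa using this

lemma aux_comp {σ τ υ : Type*} [Finite σ] [Finite τ] (a : σ → MvPowerSeries τ k)
    (b : τ → MvPowerSeries υ k)
    (ha : ∀ i, constantCoeff (a i) = 0) (hb : ∀ i, constantCoeff (b i) = 0)
    (f : MvPowerSeries σ k) :
    subst b (subst a f) = subst (fun s => subst b (a s)) f :=
  subst_comp_subst_apply (hasSubst_of_constantCoeff_zero ha) (hasSubst_of_constantCoeff_zero hb) f

lemma aux_psi_phi (f : MvPowerSeries (Fin 2) k) :
    subst ![(X 0 - X 1 : MvPowerSeries (Fin 2) k), X 1]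
      (subst ![(X 0 + X 1 : MvPowerSeries (Fin 2) k), X 1] f) = f := by
  have hb : HasSubst ![(X 0 - X 1 : MvPowerSeries (Fin 2) k), X 1] :=
    hasSubst_of_constantCoeff_zero (by intro i; fin_cases i <;> simp)
  rw [aux_comp _ _ (by intro i; fin_cases i <;> simp) (by intro i; fin_cases i <;> simp)]
  conv_rhs => rw [← id_eq f, ← subst_self]
  congr 1
  funext i
  fin_cases i
  · simp [subst_add hb, subst_X hb]
  · simp [subst_X hb]

theorem stmt1 (F : MvPowerSeries (Fin 2) k) (hF : IsFormalGroupLaw F)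
    (ι : PowerSeries k) (hι0 : PowerSeries.constantCoeff ι = 0)
    (hι : psSubst ![PowerSeries.X, ι] F = 0) :
    (∃! q : MvPowerSeries (Fin 2) k,
        formalDiff F ι = ((X 0 : MvPowerSeries (Fin 2) k) - X 1) * q) ∧
    ∀ q : MvPowerSeries (Fin 2) k,
      formalDiff F ι = ((X 0 : MvPowerSeries (Fin 2) k) - X 1) * q →
      IsUnit q ∧ (X 1 : MvPowerSeries (Fin 2) k) ∣ q - 1 := by
  obtain ⟨-, hF1, -, -⟩ := hF
  have hι0' : MvPowerSeries.constantCoeff (σ := Unit) (R := k) ι = 0 := hι0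
  have hcX : MvPowerSeries.constantCoeff (σ := Unit) (R := k) (PowerSeries.X : PowerSeries k) = 0 :=
    PowerSeries.constantCoeff_X
  have hcXι : ∀ i, MvPowerSeries.constantCoeff (σ := Unit) (R := k)
      ((![PowerSeries.X, ι] : Fin 2 → MvPowerSeries Unit k) i) = 0 := by
    intro i; fin_cases i
    · exact hcX
    · exact hι0'
  have hX1 : ∀ i : Unit, constantCoeff ((fun _ : Unit => (X 1 : MvPowerSeries (Fin 2) k)) i) = 0 := by
    simp
  rw [aux_psSubst _ hcXι] at hι
  rw [aux_psSubst _ (by intro i; fin_cases i <;> simp)] at hF1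
  set J : MvPowerSeries (Fin 2) k := subst (fun _ : Unit => (X 1 : MvPowerSeries (Fin 2) k)) ι with hJ
  have hJ0 : constantCoeff J = 0 :=
    constantCoeff_subst_eq_zero (hasSubst_of_constantCoeff_zero hX1) hX1 hι0'
  have hcJ : ∀ i, constantCoeff ((![X 0, J] : Fin 2 → MvPowerSeries (Fin 2) k) i) = 0 := by
    intro i; fin_cases i
    · simp
    · exact hJ0
  have hG : formalDiff F ι = subst ![X 0, J] F := by
    rw [formalDiff, aux_psSubst _ hX1, ← hJ, aux_psSubst _ hcJ]
  rw [hG]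
  set G : MvPowerSeries (Fin 2) k := subst ![X 0, J] F with hGdef
  -- constant terms of the substitutions
  have cφ : ∀ i, constantCoeff (![(X 0 + X 1 : MvPowerSeries (Fin 2) k), X 1] i) = 0 := by
    intro i; fin_cases i <;> simp
  have cψ : ∀ i, constantCoeff (![(X 0 - X 1 : MvPowerSeries (Fin 2) k), X 1] i) = 0 := by
    intro i; fin_cases i <;> simp
  have c0 : ∀ i, constantCoeff (![(0 : MvPowerSeries (Fin 2) k), X 1] i) = 0 := by
    intro i; fin_cases i <;> simp
  have c1 : ∀ i, constantCoeff (![(X 0 : MvPowerSeries (Fin 2) k), 0] i) = 0 := by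
    intro i; fin_cases i <;> simp
  have c11 : ∀ i, constantCoeff (![(X 1 : MvPowerSeries (Fin 2) k), X 1] i) = 0 := by
    intro i; fin_cases i <;> simp
  have hφ := hasSubst_of_constantCoeff_zero cφ
  have hψ := hasSubst_of_constantCoeff_zero cψ
  have h0 := hasSubst_of_constantCoeff_zero c0
  have h1 := hasSubst_of_constantCoeff_zero c1
  have h11 := hasSubst_of_constantCoeff_zero c11
  have hcancel : ∀ q : MvPowerSeries (Fin 2) k,
      ((X 0 : MvPowerSeries (Fin 2) k) - X 1) * q = 0 → q = 0 := by
    intro q hq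
    have h2 := congrArg (subst ![(X 0 + X 1 : MvPowerSeries (Fin 2) k), X 1]) hq
    have hz : subst ![(X 0 + X 1 : MvPowerSeries (Fin 2) k), X 1]
        (0 : MvPowerSeries (Fin 2) k) = 0 := by
      rw [← coe_substAlgHom hφ, map_zero]
    rw [subst_mul hφ, subst_sub hφ, subst_X hφ, subst_X hφ, hz] at h2
    simp only [Matrix.cons_val_zero, Matrix.cons_val_one, add_sub_cancel_right] at h2
    have h3 := aux_X0_cancel _ h2
    rw [← aux_psi_phi q, h3, ← coe_substAlgHom hψ, map_zero]
  have hdiag : subst ![(X 1 : MvPowerSeries (Fin 2) k), X 1] G = 0 := by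
    have e1 : subst ![(X 1 : MvPowerSeries (Fin 2) k), X 1] G = subst ![X 1, J] F := by
      rw [hGdef, aux_comp _ _ hcJ c11]
      congr 1
      funext i
      fin_cases i
      · simp [subst_X h11]
      · simp only [Fin.mk_one, Matrix.cons_val_one, Matrix.cons_val_fin_one]
        rw [hJ, aux_comp _ _ hX1 c11]
        simp [subst_X h11]
    have e2 := congrArg (subst (fun _ : Unit => (X 1 : MvPowerSeries (Fin 2) k))) hι
    rw [aux_comp _ _ hcXι hX1, ← coe_substAlgHom (hasSubst_of_constantCoeff_zero hX1),
      map_zero] at e2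
    rw [e1, ← e2]
    congr 1
    funext i
    rw [coe_substAlgHom]
    fin_cases i
    · exact (subst_X (hasSubst_of_constantCoeff_zero hX1) ()).symm
    · rfl
  refine ⟨?_, ?_⟩
  · have hd : (X 0 : MvPowerSeries (Fin 2) k) ∣
        subst ![(X 0 + X 1 : MvPowerSeries (Fin 2) k), X 1] G := by
      refine aux_dvd ![0, X 1] 0 rfl ?_ _ ?_
      · intro j hj; fin_cases j
        · exact absurd rfl hj
        · rfl
      · rw [aux_comp _ _ cφ c0]
        refine Eq.trans ?_ hdiag
        congr 1
        funext i
        fin_cases i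
        · simp [subst_add h0, subst_X h0]
        · simp [subst_X h0]
    obtain ⟨h, hh⟩ := hd
    refine ⟨subst ![(X 0 - X 1 : MvPowerSeries (Fin 2) k), X 1] h, ?_, ?_⟩
    · have := aux_psi_phi G
      rw [hh, subst_mul hψ, subst_X hψ] at this
      simpa using this.symm
    · intro q hq
      have := aux_psi_phi G
      rw [hh, subst_mul hψ, subst_X hψ] at this
      simp only [Matrix.cons_val_zero] at this
      rw [← sub_eq_zero]
      apply hcancel
      rw [mul_sub, ← hq, this, sub_self]
  · intro q hq
    have hJz : subst ![(X 0 : MvPowerSeries (Fin 2) k), 0] J = 0 := by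
      rw [hJ, aux_comp _ _ hX1 c1]
      simp only [subst_X h1]
      exact subst_zero_of_constantCoeff_zero hι0'
    have hGx : subst ![(X 0 : MvPowerSeries (Fin 2) k), 0] G = X 0 := by
      rw [hGdef, aux_comp _ _ hcJ c1]
      refine Eq.trans ?_ hF1
      congr 1
      funext i
      fin_cases i
      · simp [subst_X h1]
      · simpa using hJz
    have hd : (X 1 : MvPowerSeries (Fin 2) k) ∣ q - 1 := by
      refine aux_dvd ![X 0, 0] 1 rfl ?_ _ ?_
      · intro j hj; fin_cases j
        · rfl
        · exact absurd rfl hj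
      · apply aux_X0_cancel
        rw [hq, subst_mul h1, subst_sub h1, subst_X h1, subst_X h1] at hGx
        simp only [Matrix.cons_val_zero, Matrix.cons_val_one, sub_zero] at hGx
        have ho : subst ![(X 0 : MvPowerSeries (Fin 2) k), 0]
            (1 : MvPowerSeries (Fin 2) k) = 1 := by
          rw [← coe_substAlgHom h1, map_one]
        rw [subst_sub h1, mul_sub, hGx, ho, mul_one, sub_self]
    refine ⟨?_, hd⟩
    rw [isUnit_iff_constantCoeff]
    obtain ⟨r, hr⟩ := hd
    have := congrArg constantCoeff hr
    simp only [map_sub, map_one, map_mul, constantCoeff_X, zero_mul] at this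
    rw [sub_eq_zero.1 this]
    exact isUnit_one
end
end

section
/- Let F be a formal group law over a commutative ring R, with formal inverse [-1]y and associated power series q(x,y). Then [-1]y = −y·q(0,y) and F(x,y) = (x − [-1]y)·q(x, [-1]y). Consequently, the coefficients of q(x,y) generate the same subring of R as the coefficients of F(x,y). -/
noncomputable section
open MvPowerSeries

variable {k : Type*} [CommRing k]

theorem psSubst_eq_subst {σ τ : Type*} [Fintype σ] [DecidableEq σ]
    {a : σ → MvPowerSeries τ k} (ha : ∀ i, constantCoeff (a i) = 0) (f : MvPowerSeries σ k) :
    psSubst a f = subst a f := by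
  ext e
  rw [coeff_subst (hasSubst_of_constantCoeff_zero ha)]
  rw [finsum_eq_sum_of_support_subset (s := Finset.Iic
    (Finsupp.equivFunOnFinite.symm fun _ : σ => e.sum fun _ m => m))]
  · change ∑ d ∈ _, _ = _
    refine Finset.sum_congr rfl fun d _ => ?_
    rw [smul_eq_mul, Finsupp.prod_fintype _ _ (by simp)]
  · intro d hd
    simp only [Finset.coe_Iic, Set.mem_Iic]
    by_contra hlt
    apply hd
    have hlt' : ∃ i, e.degree < d i := by
      by_contra hcon
      push Not at hcon
      exact hlt fun i => hcon i
    obtain ⟨i, hi⟩ := hlt'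
    simp only
    rw [Finsupp.prod_fintype _ _ (by simp), coeff_of_lt_order (d := e), smul_zero]
    refine lt_of_lt_of_le ?_ (le_order_prod _ _)
    refine lt_of_lt_of_le ?_ (Finset.single_le_sum (fun _ _ => zero_le) (Finset.mem_univ i))
    refine lt_of_lt_of_le ?_ (le_order_pow_of_constantCoeff_eq_zero (d i) (ha i))
    exact_mod_cast hi

theorem psSubst_constantCoeff {σ τ : Type*} [Fintype σ] [DecidableEq σ]
    {a : σ → MvPowerSeries τ k} (ha : ∀ i, constantCoeff (a i) = 0) {f : MvPowerSeries σ k}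
    (hf : constantCoeff f = 0) : constantCoeff (psSubst a f) = 0 := by
  rw [psSubst_eq_subst ha]
  exact constantCoeff_subst_eq_zero (hasSubst_of_constantCoeff_zero ha) ha hf

theorem psSubst_comp {σ τ υ : Type*} [Fintype σ] [DecidableEq σ] [Fintype τ] [DecidableEq τ]
    {a : σ → MvPowerSeries τ k} (ha : ∀ i, constantCoeff (a i) = 0)
    {b : τ → MvPowerSeries υ k} (hb : ∀ i, constantCoeff (b i) = 0) (f : MvPowerSeries σ k) :
    psSubst b (psSubst a f) = psSubst (fun i => psSubst b (a i)) f := by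
  rw [psSubst_eq_subst (a := fun i => psSubst b (a i)) (fun i => psSubst_constantCoeff hb (ha i)),
    psSubst_eq_subst ha, psSubst_eq_subst hb]
  simp_rw [psSubst_eq_subst hb]
  exact subst_comp_subst_apply (hasSubst_of_constantCoeff_zero ha)
    (hasSubst_of_constantCoeff_zero hb) f

theorem psSubst_X' {σ τ : Type*} [Fintype σ] [DecidableEq σ]
    {a : σ → MvPowerSeries τ k} (ha : ∀ i, constantCoeff (a i) = 0) (i : σ) :
    psSubst a (X i) = a i := by
  rw [psSubst_eq_subst ha, subst_X (hasSubst_of_constantCoeff_zero ha)]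

theorem psSubst_mul' {σ τ : Type*} [Fintype σ] [DecidableEq σ]
    {a : σ → MvPowerSeries τ k} (ha : ∀ i, constantCoeff (a i) = 0) (f g : MvPowerSeries σ k) :
    psSubst a (f * g) = psSubst a f * psSubst a g := by
  simp only [psSubst_eq_subst ha, subst_mul (hasSubst_of_constantCoeff_zero ha)]

theorem psSubst_sub' {σ τ : Type*} [Fintype σ] [DecidableEq σ]
    {a : σ → MvPowerSeries τ k} (ha : ∀ i, constantCoeff (a i) = 0) (f g : MvPowerSeries σ k) :
    psSubst a (f - g) = psSubst a f - psSubst a g := by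
  simp only [psSubst_eq_subst ha, subst_sub (hasSubst_of_constantCoeff_zero ha)]

theorem psSubst_zero' {σ τ : Type*} [Fintype σ] [DecidableEq σ]
    (a : σ → MvPowerSeries τ k) : psSubst a (0 : MvPowerSeries σ k) = 0 := by
  ext e
  change ∑ d ∈ _, _ = _
  simp

theorem psSubst_self (f : MvPowerSeries (Fin 2) k) : psSubst ![X 0, X 1] f = f := by
  have h : (![X 0, X 1] : Fin 2 → MvPowerSeries (Fin 2) k) = X := by
    funext i; fin_cases i <;> rfl
  rw [h, psSubst_eq_subst (by simp), subst_self, id]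

/-- Composition for two-variable series. -/
theorem psSubst_comp2 {τ υ : Type*} [Fintype τ] [DecidableEq τ]
    {a₀ a₁ : MvPowerSeries τ k} (h0 : constantCoeff a₀ = 0) (h1 : constantCoeff a₁ = 0)
    {b : τ → MvPowerSeries υ k} (hb : ∀ i, constantCoeff (b i) = 0) (f : MvPowerSeries (Fin 2) k) :
    psSubst b (psSubst ![a₀, a₁] f) = psSubst ![psSubst b a₀, psSubst b a₁] f := by
  rw [psSubst_comp (by intro i; fin_cases i <;> simpa) hb]
  congr 1
  funext i; fin_cases i <;> rfl

/-- Power series with coefficients in a subring. -/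
def coeffSubring (S : Subring k) (σ : Type*) : Subring (MvPowerSeries σ k) :=
  (MvPowerSeries.map S.subtype).range

theorem mem_coeffSubring {S : Subring k} {σ : Type*} {f : MvPowerSeries σ k} :
    f ∈ coeffSubring S σ ↔ ∀ d, coeff d f ∈ S := by
  constructor
  · rintro ⟨g, rfl⟩ d
    rw [coeff_map]
    exact (coeff d g).2
  · intro h
    exact ⟨fun d => ⟨coeff d f, h d⟩, by ext d; rfl⟩

theorem X_mem_coeffSubring (S : Subring k) {σ : Type*} (i : σ) :
    (X i : MvPowerSeries σ k) ∈ coeffSubring S σ := ⟨X i, by simp⟩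

theorem psSubst_mem {S : Subring k} {σ τ : Type*} [Fintype σ] [DecidableEq σ]
    {a : σ → MvPowerSeries τ k} (ha : ∀ i, a i ∈ coeffSubring S τ) {f : MvPowerSeries σ k}
    (hf : f ∈ coeffSubring S σ) : psSubst a f ∈ coeffSubring S τ := by
  rw [mem_coeffSubring]
  intro e
  change ∑ d ∈ _, _ ∈ S
  refine S.sum_mem fun d _ => S.mul_mem (mem_coeffSubring.1 hf d) ?_
  exact mem_coeffSubring.1 (Subring.prod_mem _ fun i _ => Subring.pow_mem _ (ha i) _) e

theorem coeff_pow_mem {S : Subring k} {f : PowerSeries k} {n : ℕ}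
    (h : ∀ m < n, PowerSeries.coeff m f ∈ S) (j : ℕ) :
    ∀ m < n, PowerSeries.coeff m (f ^ j) ∈ S := by
  induction j with
  | zero =>
    intro m _
    rw [pow_zero, PowerSeries.coeff_one]
    split_ifs
    exacts [S.one_mem, S.zero_mem]
  | succ j ih =>
    intro m hm
    rw [pow_succ, PowerSeries.coeff_mul]
    refine S.sum_mem fun p hp => ?_
    have := Finset.HasAntidiagonal.mem_antidiagonal.1 hp
    exact S.mul_mem (ih _ (by omega)) (h _ (by omega))

theorem coeff_axis (F : MvPowerSeries (Fin 2) k)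
    (h : psSubst ![0, X 1] F = (X 1 : MvPowerSeries (Fin 2) k)) (d : Fin 2 →₀ ℕ) (hd : d 0 = 0) :
    coeff d F = if d = Finsupp.single 1 1 then 1 else 0 := by
  rw [← coeff_X, ← h]
  symm
  change ∑ d' ∈ _, _ = _
  rw [Finset.sum_eq_single d]
  · have : coeff d (∏ i, (![0, X 1] : Fin 2 → MvPowerSeries (Fin 2) k) i ^ d i) = 1 := by
      rw [Fin.prod_univ_two]
      simp only [Matrix.cons_val_zero, Matrix.cons_val_one, hd, pow_zero, one_mul]
      rw [coeff_X_pow, if_pos]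
      ext i; fin_cases i <;> simp [hd]
    rw [this, mul_one]
  · intro b _ hb
    rw [Fin.prod_univ_two]
    simp only [Matrix.cons_val_zero, Matrix.cons_val_one]
    by_cases h0 : b 0 = 0
    · rw [h0, pow_zero, one_mul, coeff_X_pow, if_neg, mul_zero]
      intro hdb
      apply hb
      ext i; fin_cases i
      · simp [h0, hd]
      · simp [hdb]
    · simp [h0]
  · intro hn
    exfalso
    apply hn
    rw [Finset.mem_Iic]
    intro i
    exact Finsupp.le_degree i d

theorem inverse_coeff_mem (F : MvPowerSeries (Fin 2) k)
    (h : psSubst ![0, X 1] F = (X 1 : MvPowerSeries (Fin 2) k))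
    (ι : PowerSeries k) (hι0 : PowerSeries.constantCoeff ι = 0)
    (hι : psSubst ![PowerSeries.X, ι] F = 0) (S : Subring k) (hS : ∀ d, coeff d F ∈ S) (n : ℕ) :
    PowerSeries.coeff n ι ∈ S := by
  induction n using Nat.strong_induction_on with
  | _ n ih =>
  rcases Nat.eq_zero_or_pos n with rfl | hn
  · rw [PowerSeries.coeff_zero_eq_constantCoeff_apply, hι0]
    exact S.zero_mem
  have h1 := congrArg (PowerSeries.coeff n) hι
  change ∑ d ∈ _, _ = PowerSeries.coeff n 0 at h1
  rw [map_zero, ← Finset.add_sum_erase _ _ (a := Finsupp.single 1 1)] at h1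
  · rw [coeff_axis F h _ (by simp), if_pos rfl, one_mul, Fin.prod_univ_two] at h1
    simp only [Matrix.cons_val_zero, Matrix.cons_val_one, Finsupp.single_eq_same] at h1
    rw [Finsupp.single_eq_of_ne (by decide), pow_zero, one_mul, pow_one] at h1
    change PowerSeries.coeff n ι + _ = 0 at h1
    rw [eq_neg_of_add_eq_zero_left h1]
    refine S.neg_mem (S.sum_mem fun d hd => ?_)
    by_cases h0 : d 0 = 0
    · rw [coeff_axis F h _ h0, if_neg (Finset.ne_of_mem_erase hd), zero_mul]
      exact S.zero_mem
    · refine S.mul_mem (hS d) ?_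
      rw [Fin.prod_univ_two]
      change PowerSeries.coeff n (PowerSeries.X ^ d 0 * ι ^ d 1) ∈ S
      rw [PowerSeries.coeff_X_pow_mul']
      split_ifs
      · exact coeff_pow_mem ih _ _ (by omega)
      · exact S.zero_mem
  · rw [Finset.mem_Iic]
    intro i
    fin_cases i
    · simp
    · simp; omega

theorem quotient_mem {S : Subring k} (q : MvPowerSeries (Fin 2) k)
    (h : ((X 0 : MvPowerSeries (Fin 2) k) - X 1) * q ∈ coeffSubring S (Fin 2)) :
    q ∈ coeffSubring S (Fin 2) := by
  rw [mem_coeffSubring] at h ⊢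
  suffices H : ∀ (n : ℕ) (d : Fin 2 →₀ ℕ), d 1 = n → coeff d q ∈ S from fun d => H _ d rfl
  intro n
  induction n with
  | zero =>
    intro d hd
    have h1 := h (Finsupp.single 0 1 + d)
    rw [sub_mul, map_sub, X, X, coeff_add_monomial_mul, one_mul, coeff_monomial_mul, if_neg,
      sub_zero] at h1
    · exact h1
    · intro hle
      have := hle 1
      simp [hd] at this
  | succ n ih =>
    intro d hd
    obtain ⟨d', rfl⟩ : ∃ d', d = Finsupp.single 1 1 + d' := by
      refine ⟨d - Finsupp.single 1 1, ?_⟩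
      ext i; fin_cases i
      · simp
      · simp [hd]
    have h1 := h (Finsupp.single 0 1 + (Finsupp.single 1 1 + d'))
    rw [sub_mul, map_sub, X, X, coeff_add_monomial_mul, one_mul, add_left_comm,
      coeff_add_monomial_mul, one_mul] at h1
    have h2 := ih (Finsupp.single 0 1 + d') (by simp at hd ⊢; omega)
    have h3 := S.add_mem h1 h2
    rwa [sub_add_cancel] at h3

theorem inverse_involutive (F : MvPowerSeries (Fin 2) k) (hF : IsFormalGroupLaw F)
    (hF0 : constantCoeff F = 0)
    (ι : PowerSeries k) (hι0 : constantCoeff (ι : MvPowerSeries Unit k) = 0)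
    (hι : psSubst ![PowerSeries.X, ι] F = 0) :
    psSubst (fun _ : Unit => psSubst (fun _ : Unit => (X 1 : MvPowerSeries (Fin 2) k)) ι) ι =
      X 1 := by
  obtain ⟨-, hx, hy, hassoc⟩ := hF
  set J : MvPowerSeries (Fin 2) k := psSubst (fun _ : Unit => X 1) ι with hJ
  have hJ0 : constantCoeff J = 0 := psSubst_constantCoeff (by simp) hι0
  set K : MvPowerSeries (Fin 2) k := psSubst (fun _ : Unit => J) ι with hK
  have hK0 : constantCoeff K = 0 := psSubst_constantCoeff (by simp [hJ0]) hι0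
  -- general cancellation and units
  have inv : ∀ u : MvPowerSeries (Fin 2) k, constantCoeff u = 0 →
      psSubst ![u, psSubst (fun _ : Unit => u) ι] F = 0 := by
    intro u hu
    have h1 := congrArg (psSubst (fun _ : Unit => u)) hι
    rw [psSubst_comp2 (by simp [PowerSeries.X]) hι0 (by simpa using hu)] at h1
    rw [PowerSeries.X, psSubst_X' (by simpa using hu)] at h1
    rw [h1]
    exact psSubst_zero' _
  have unitR : ∀ u : MvPowerSeries (Fin 2) k, constantCoeff u = 0 → psSubst ![u, 0] F = u := by
    intro u hu
    have hb : ∀ i : Fin 2, constantCoeff ((![u, u] : Fin 2 → MvPowerSeries (Fin 2) k) i) = 0 := by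
      intro i; fin_cases i <;> simpa
    have h1 := congrArg (psSubst ![u, u]) hx
    rw [psSubst_comp2 (by simp) (by simp) hb, psSubst_X' hb, psSubst_zero'] at h1
    exact h1
  have unitL : ∀ u : MvPowerSeries (Fin 2) k, constantCoeff u = 0 → psSubst ![0, u] F = u := by
    intro u hu
    have hb : ∀ i : Fin 2, constantCoeff ((![u, u] : Fin 2 → MvPowerSeries (Fin 2) k) i) = 0 := by
      intro i; fin_cases i <;> simpa
    have h1 := congrArg (psSubst ![u, u]) hy
    rw [psSubst_comp2 (by simp) (by simp) hb, psSubst_X' hb, psSubst_zero'] at h1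
    exact h1
  have hb : ∀ i : Fin 3, constantCoeff ((![X 1, J, K] : Fin 3 → MvPowerSeries (Fin 2) k) i) = 0 := by
    intro i; fin_cases i <;> simp [hJ0, hK0]
  have c2 : ∀ i j : Fin 3, ∀ l,
      constantCoeff ((![X i, X j] : Fin 2 → MvPowerSeries (Fin 3) k) l) = 0 := by
    intro i j l; fin_cases l <;> simp
  have h1 := congrArg (psSubst ![X 1, J, K]) hassoc
  rw [psSubst_comp2 (psSubst_constantCoeff (c2 _ _) hF0) (by simp) hb,
    psSubst_comp2 (by simp) (psSubst_constantCoeff (c2 _ _) hF0) hb,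
    psSubst_comp2 (by simp) (by simp) hb, psSubst_comp2 (by simp) (by simp) hb,
    psSubst_X' hb, psSubst_X' hb, psSubst_X' hb] at h1
  change psSubst ![psSubst ![X 1, J] F, K] F = psSubst ![X 1, psSubst ![J, K] F] F at h1
  rw [inv _ (by simp), inv _ hJ0, unitL _ hK0, unitR _ (by simp)] at h1
  exact h1

theorem stmt2 (F : MvPowerSeries (Fin 2) k) (hF : IsFormalGroupLaw F)
    (ι : PowerSeries k) (hι0 : PowerSeries.constantCoeff ι = 0)
    (hι : psSubst ![PowerSeries.X, ι] F = 0)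
    (q : MvPowerSeries (Fin 2) k)
    (hq : formalDiff F ι = ((X 0 : MvPowerSeries (Fin 2) k) - X 1) * q) :
    -- `[-1]y = −y·q(0,y)` (as elements of `k⟦x,y⟧`, with `[-1]y` substituted in the variable `y`)
    psSubst (fun _ : Unit => (X 1 : MvPowerSeries (Fin 2) k)) ι =
      -(X 1 : MvPowerSeries (Fin 2) k) * psSubst ![0, X 1] q ∧
    -- `F(x,y) = (x − [-1]y)·q(x, [-1]y)`
    F = ((X 0 : MvPowerSeries (Fin 2) k) -
          psSubst (fun _ : Unit => (X 1 : MvPowerSeries (Fin 2) k)) ι) *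
        psSubst ![X 0, psSubst (fun _ : Unit => (X 1 : MvPowerSeries (Fin 2) k)) ι] q ∧
    -- the coefficients of `q` generate the same subring of `k` as the coefficients of `F`
    Subring.closure (Set.range fun d : Fin 2 →₀ ℕ => MvPowerSeries.coeff d q) =
      Subring.closure (Set.range fun d : Fin 2 →₀ ℕ => MvPowerSeries.coeff d F) := by
  have hy := hF.2.2.1
  have hF0 : constantCoeff F = 0 := by
    rw [← coeff_zero_eq_constantCoeff_apply, coeff_axis F hy 0 rfl, if_neg]
    intro h
    simpa using DFunLike.congr_fun h 1
  have hι0' : constantCoeff (ι : MvPowerSeries Unit k) = 0 := hι0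
  have hinv := inverse_involutive F hF hF0 ι hι0' hι
  unfold formalDiff at hq
  have hJ0 : constantCoeff (psSubst (fun _ : Unit => (X 1 : MvPowerSeries (Fin 2) k)) ι) = 0 :=
    psSubst_constantCoeff (by simp) hι0'
  have hJS : ∀ S : Subring k, (∀ d, coeff d F ∈ S) →
      psSubst (fun _ : Unit => (X 1 : MvPowerSeries (Fin 2) k)) ι ∈ coeffSubring S (Fin 2) := by
    intro S hS
    refine psSubst_mem (fun _ => X_mem_coeffSubring S _) (mem_coeffSubring.2 fun d => ?_)
    have h1 := inverse_coeff_mem F hy ι hι0 hι S hS (d ())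
    rw [PowerSeries.coeff] at h1
    have hd : d = Finsupp.single () (d ()) := by ext; simp
    rw [hd]
    exact h1
  have hJcomp : ∀ b : Fin 2 → MvPowerSeries (Fin 2) k, (∀ i, constantCoeff (b i) = 0) →
      psSubst b (psSubst (fun _ : Unit => (X 1 : MvPowerSeries (Fin 2) k)) ι) =
        psSubst (fun _ : Unit => b 1) ι := by
    intro b hb
    rw [psSubst_comp (by simp) hb, psSubst_X' hb]
  set J := psSubst (fun _ : Unit => (X 1 : MvPowerSeries (Fin 2) k)) ι with hJ
  have b1 : ∀ i : Fin 2, constantCoeff ((![0, X 1] : Fin 2 → MvPowerSeries (Fin 2) k) i) = 0 := by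
    intro i; fin_cases i <;> simp
  have b2 : ∀ i : Fin 2, constantCoeff ((![X 0, J] : Fin 2 → MvPowerSeries (Fin 2) k) i) = 0 := by
    intro i; fin_cases i <;> simp [hJ0]
  have b3 : ∀ i : Fin 2, constantCoeff ((![0, J] : Fin 2 → MvPowerSeries (Fin 2) k) i) = 0 := by
    intro i; fin_cases i <;> simp [hJ0]
  have e1 : J = -(X 1 : MvPowerSeries (Fin 2) k) * psSubst ![0, X 1] q := by
    have h1 := congrArg (psSubst ![0, (X 1 : MvPowerSeries (Fin 2) k)]) hq
    rw [psSubst_mul' b1, psSubst_sub' b1, psSubst_X' b1, psSubst_X' b1,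
      psSubst_comp2 (by simp) hJ0 b1, psSubst_X' b1, hJcomp _ b1] at h1
    have h2 := congrArg (psSubst ![0, J]) hy
    rw [psSubst_comp2 (by simp) (by simp) b3, psSubst_X' b3, psSubst_zero'] at h2
    change psSubst ![0, J] F = _ at h1
    change psSubst ![0, J] F = J at h2
    rw [← h2, h1]
    simp
  have e2 : F = ((X 0 : MvPowerSeries (Fin 2) k) - J) * psSubst ![X 0, J] q := by
    have h1 := congrArg (psSubst ![X 0, J]) hq
    rw [psSubst_mul' b2, psSubst_sub' b2, psSubst_X' b2, psSubst_X' b2,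
      psSubst_comp2 (by simp) hJ0 b2, psSubst_X' b2, hJcomp _ b2] at h1
    change psSubst ![X 0, psSubst (fun _ : Unit => J) ι] F = (X 0 - J) * _ at h1
    rw [hinv, psSubst_self] at h1
    exact h1
  refine ⟨e1, e2, le_antisymm ?_ ?_⟩
  · rw [Subring.closure_le]
    rintro _ ⟨d, rfl⟩
    set S := Subring.closure (Set.range fun d : Fin 2 →₀ ℕ => MvPowerSeries.coeff d F)
    have hS : ∀ d, coeff d F ∈ S := fun d => Subring.subset_closure ⟨d, rfl⟩
    refine mem_coeffSubring.1 (quotient_mem (S := S) q ?_) d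
    rw [← hq]
    refine psSubst_mem ?_ (mem_coeffSubring.2 hS)
    intro i; fin_cases i
    · exact X_mem_coeffSubring S _
    · exact hJS S hS
  · rw [Subring.closure_le]
    rintro _ ⟨d, rfl⟩
    set S := Subring.closure (Set.range fun d : Fin 2 →₀ ℕ => MvPowerSeries.coeff d q)
    have hS : q ∈ coeffSubring S (Fin 2) :=
      mem_coeffSubring.2 fun d => Subring.subset_closure ⟨d, rfl⟩
    have hJm : J ∈ coeffSubring S (Fin 2) := by
      rw [e1]
      refine Subring.mul_mem _ (Subring.neg_mem _ (X_mem_coeffSubring S _)) (psSubst_mem ?_ hS)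
      intro i; fin_cases i
      · exact Subring.zero_mem _
      · exact X_mem_coeffSubring S _
    refine mem_coeffSubring.1 ?_ d
    rw [e2]
    refine Subring.mul_mem _ (Subring.sub_mem _ (X_mem_coeffSubring S _) hJm) (psSubst_mem ?_ hS)
    intro i; fin_cases i
    · exact X_mem_coeffSubring S _
    · exact hJm
end
end

section
/- Let F be a formal group law over a commutative ring R with associated unit q(x,y), and set p = q⁻¹ ∈ R⟦x,y⟧. Fix n ≥ 2 and a root α = (i,j) with 1 ≤ i < j ≤ n; write p_{ij} = p(x_i, x_j) ∈ R⟦x₁,…,x_n⟧ and let r_α be the R-algebra automorphism of R⟦x₁,…,x_n⟧ exchanging x_i and x_j. Then for every f ∈ R⟦x₁,…,x_n⟧ there is a unique power series A_α(f) ∈ R⟦x₁,…,x_n⟧ such that (x_i − x_j)·A_α(f) = p_{ij}·f − r_α(p_{ij}·f). (Thus the generalized divided difference operator A_α(f) = f/(x_i[-1]x_j) + r_α(f)/(x_j[-1]x_i) is well defined and involves no denominators.) -/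
noncomputable section
open MvPowerSeries

variable {k : Type*} [CommRing k]

/-- The automorphism of `k⟦x₁,…⟧` induced by a permutation of the variables. -/
def renamePS {σ : Type*} (e : Equiv.Perm σ) (f : MvPowerSeries σ k) : MvPowerSeries σ k :=
  fun d => MvPowerSeries.coeff (Finsupp.equivMapDomain e d) f

/-- coefficient of a product with a variable -/
theorem aux_coeff_X_mul {σ : Type*} (i : σ) (g : MvPowerSeries σ k) (d : σ →₀ ℕ) :
    coeff d ((X i : MvPowerSeries σ k) * g) =
      if 1 ≤ d i then coeff (d - Finsupp.single i 1) g else 0 := by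
  classical
  rw [X, coeff_monomial_mul]
  simp

theorem aux_unique {σ : Type*} (i j : σ) (hij : i ≠ j) (g : MvPowerSeries σ k)
    (h : ((X i : MvPowerSeries σ k) - X j) * g = 0) : g = 0 := by
  classical
  have key : ∀ m : ℕ, ∀ d : σ →₀ ℕ, d j = m → coeff d g = 0 := by
    intro m
    induction m with
    | zero =>
      intro d hd
      have := congrArg (coeff (d + Finsupp.single i 1)) h
      rw [sub_mul, map_sub, aux_coeff_X_mul, aux_coeff_X_mul] at this
      simpa [hd, hij, Finsupp.single_apply] using this
    | succ m ih =>
      intro d hd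
      have := congrArg (coeff (d + Finsupp.single i 1)) h
      rw [sub_mul, map_sub, aux_coeff_X_mul, aux_coeff_X_mul,
        ih (d + Finsupp.single i 1 - Finsupp.single j 1)
          (by simp [hd, hij, Finsupp.single_apply])] at this
      simpa [hd, hij, Finsupp.single_apply] using this
  ext d
  simpa using key _ d rfl

theorem aux_exists {σ : Type*} [DecidableEq σ] (i j : σ) (hij : i ≠ j) (h : MvPowerSeries σ k) :
    ∃ g, ((X i : MvPowerSeries σ k) - X j) * g = h - renamePS (Equiv.swap i j) h := by
  let H : (σ →₀ ℕ) → k := fun d =>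
    coeff d h - coeff (Finsupp.equivMapDomain (Equiv.swap i j) d) h
  let g : MvPowerSeries σ k := fun d =>
    ∑ t ∈ Finset.range (d j + 1), H (d + Finsupp.single i (1 + t) - Finsupp.single j t)
  let S : (σ →₀ ℕ) → k := fun d =>
    ∑ t ∈ Finset.range (d j + 1), H (d + Finsupp.single i t - Finsupp.single j t)
  have hg : ∀ d, coeff d g =
    ∑ t ∈ Finset.range (d j + 1), H (d + Finsupp.single i (1 + t) - Finsupp.single j t) :=
    fun d => rfl
  refine ⟨g, ?_⟩
  ext d
  rw [sub_mul, map_sub, aux_coeff_X_mul, aux_coeff_X_mul]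
  have hR : coeff d (h - renamePS (Equiv.swap i j) h) = H d := by
    rw [map_sub]; rfl
  have h1 : (if 1 ≤ d i then coeff (d - Finsupp.single i 1) g else 0) = S d := by
    split_ifs with hd
    · rw [hg]
      have e : (d - Finsupp.single i 1 : σ →₀ ℕ) j = d j := by
        simp [Finsupp.single_apply, hij]
      rw [e]
      refine Finset.sum_congr rfl fun t _ => congrArg H ?_
      ext x
      simp only [Finsupp.coe_add, Finsupp.coe_tsub, Pi.add_apply, Pi.sub_apply,
        Finsupp.single_apply]
      split_ifs <;> subst_vars <;> first | omega | (exact absurd rfl hij)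
    · have hi : d i = 0 := by omega
      change 0 = ∑ t ∈ Finset.range (d j + 1), (coeff _ h - coeff _ h)
      rw [Finset.sum_sub_distrib, eq_comm, sub_eq_zero, ← Finset.sum_range_reflect]
      refine Finset.sum_congr rfl fun t ht => congrArg (fun e => coeff e h) ?_
      have ht' := Finset.mem_range.1 ht
      ext x
      simp only [Finsupp.coe_add, Finsupp.coe_tsub, Pi.add_apply, Pi.sub_apply,
        Finsupp.single_apply, Finsupp.equivMapDomain_apply, Equiv.symm_swap]
      by_cases hxi : x = i
      · subst hxi
        simp [hij, hij.symm, hi]; try omega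
      · by_cases hxj : x = j
        · subst hxj
          simp [hij, hij.symm, hi]; try omega
        · simp [Equiv.swap_apply_of_ne_of_ne hxi hxj, Ne.symm hxi, Ne.symm hxj]
  have h2 : (if 1 ≤ d j then coeff (d - Finsupp.single j 1) g else 0) = S d - H d := by
    have hS : S d = (∑ t ∈ Finset.range (d j),
        H (d + Finsupp.single i (t+1) - Finsupp.single j (t+1))) + H d := by
      change ∑ t ∈ Finset.range (d j + 1), _ = _
      rw [Finset.sum_range_succ']
      simp
    rw [hS, add_sub_cancel_right]
    split_ifs with hd
    · rw [hg]
      have e : (d - Finsupp.single j 1 : σ →₀ ℕ) j + 1 = d j := by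
        simp; omega
      rw [e]
      refine Finset.sum_congr rfl fun t _ => congrArg H ?_
      ext x
      simp only [Finsupp.coe_add, Finsupp.coe_tsub, Pi.add_apply, Pi.sub_apply,
        Finsupp.single_apply]
      split_ifs <;> subst_vars <;> first | omega | (exact absurd rfl hij)
    · have : d j = 0 := by omega
      simp [this]
  rw [h1, h2, hR]
  ring

theorem stmt5 (F : MvPowerSeries (Fin 2) k) (hF : IsFormalGroupLaw F)
    (ι : PowerSeries k) (hι0 : PowerSeries.constantCoeff ι = 0)
    (hι : psSubst ![PowerSeries.X, ι] F = 0)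
    (q p : MvPowerSeries (Fin 2) k)
    (hq : formalDiff F ι = ((X 0 : MvPowerSeries (Fin 2) k) - X 1) * q)
    (hp : p * q = 1)
    (n : ℕ) (hn : 2 ≤ n) (i j : Fin n) (hij : i < j)
    (f : MvPowerSeries (Fin n) k) :
    ∃! g : MvPowerSeries (Fin n) k,
      ((X i : MvPowerSeries (Fin n) k) - X j) * g =
        psSubst ![(X i : MvPowerSeries (Fin n) k), X j] p * f -
          renamePS (Equiv.swap i j)
            (psSubst ![(X i : MvPowerSeries (Fin n) k), X j] p * f) := by
  obtain ⟨g, hg⟩ := aux_exists i j hij.ne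
    (psSubst ![(X i : MvPowerSeries (Fin n) k), X j] p * f)
  refine ⟨g, hg, fun g' hg' => ?_⟩
  refine sub_eq_zero.1 (aux_unique i j hij.ne (g' - g) ?_)
  rw [mul_sub, hg, sub_eq_zero]
  exact hg'
end
end
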